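/- Let G be a group, π : G → U(H) a unitary representation, and suppose there is a nonzero Hilbert–Schmidt operator X on H satisfying π_g X π_g* = X for all g ∈ G. Then H contains a nonzero finite-dimensional π-invariant subspace. -/

import Mathlib

/-! A Hilbert–Schmidt operator is a norm limit of its finite-rank truncations along the basis, by
Cauchy–Schwarz and Bessel's inequality, hence compact (`isCompactOperator_of_summable_norm_sq`).
So `T = X† X` is compact, self-adjoint and nonzero, and the spectral theorem supplies an eigenvalue
`μ ≠ 0` with finite-dimensional eigenspace. As `X` intertwines `π` with itself and `π` is unitary,
`T` commutes with every `π g`, and so the eigenspace is `π`-invariant. -/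

open scoped InnerProductSpace

theorem isCompactOperator_rankOne {𝕜 H : Type*} [RCLike 𝕜]
    [NormedAddCommGroup H] [InnerProductSpace 𝕜 H] (u v : H) :
    IsCompactOperator ((innerSL 𝕜 u).smulRight v : H →L[𝕜] H) := by
  have h : IsCompactOperator (innerSL 𝕜 u : H →L[𝕜] 𝕜) :=
    ⟨Metric.closedBall 0 1, isCompact_closedBall 0 1,
      (innerSL 𝕜 u).continuous.continuousAt.preimage_mem_nhds
        (by rw [map_zero]; exact Metric.closedBall_mem_nhds 0 one_pos)⟩
  exact h.clm_comp (ContinuousLinearMap.toSpanSingleton 𝕜 v)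

theorem isCompactOperator_of_summable_norm_sq {𝕜 H : Type*} [RCLike 𝕜]
    [NormedAddCommGroup H] [InnerProductSpace 𝕜 H] [CompleteSpace H] (X : H →L[𝕜] H)
    {ι : Type*} (b : HilbertBasis ι 𝕜 H)
    (hHS : Summable (fun i => ‖X (b i)‖ ^ 2)) : IsCompactOperator X := by
  classical
  let F : Finset ι → H →L[𝕜] H := fun s => ∑ i ∈ s, (innerSL 𝕜 (b i)).smulRight (X (b i))
  have hF (s x) : F s x = ∑ i ∈ s, ⟪b i, x⟫_𝕜 • X (b i) := by
    simp [F]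
  have hFc (s) : F s ∈ {f : H →L[𝕜] H | IsCompactOperator f} :=
    (compactOperator (RingHom.id 𝕜) H H).sum_mem
      (fun i _ => isCompactOperator_rankOne (b i) (X (b i)))
  refine isClosed_setOfPred_isCompactOperator.closure_subset (Metric.mem_closure_iff.2 ?_)
  intro ε hε
  obtain ⟨s, hs⟩ := summable_iff_vanishing_norm.1 hHS ((ε / 2) ^ 2) (by positivity)
  refine ⟨F s, hFc s, ?_⟩
  rw [dist_eq_norm]
  refine lt_of_le_of_lt (ContinuousLinearMap.opNorm_le_bound _ (half_pos hε).le fun x => ?_)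
    (half_lt_self hε)
  have hsum : HasSum (fun i => ⟪b i, x⟫_𝕜 • X (b i)) (X x) := by
    simpa [b.repr_apply_apply] using (b.hasSum_repr x).mapL X
  have hlim : Filter.Tendsto
      (fun t : Finset ι => ‖(∑ i ∈ t, ⟪b i, x⟫_𝕜 • X (b i)) - F s x‖) Filter.atTop
      (nhds ‖X x - F s x‖) := (Filter.Tendsto.sub_const hsum _).norm
  refine le_of_tendsto hlim ?_
  filter_upwards [Filter.eventually_ge_atTop s] with t hst
  rw [hF, ← Finset.sum_sdiff hst, add_sub_cancel_right]
  have htail : ∑ i ∈ t \ s, ‖X (b i)‖ ^ 2 ≤ (ε / 2) ^ 2 :=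
    (le_abs_self _).trans (hs _ Finset.sdiff_disjoint).le
  have hbessel : ∑ i ∈ t \ s, ‖⟪b i, x⟫_𝕜‖ ^ 2 ≤ ‖x‖ ^ 2 :=
    b.orthonormal.sum_inner_products_le x
  calc ‖∑ i ∈ t \ s, ⟪b i, x⟫_𝕜 • X (b i)‖
      ≤ ∑ i ∈ t \ s, ‖⟪b i, x⟫_𝕜‖ * ‖X (b i)‖ :=
        (norm_sum_le _ _).trans_eq (by simp only [norm_smul])
    _ ≤ ε / 2 * ‖x‖ := by
        refine le_of_sq_le_sq ?_ (by positivity)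
        calc _ ≤ (∑ i ∈ t \ s, ‖⟪b i, x⟫_𝕜‖ ^ 2) * ∑ i ∈ t \ s, ‖X (b i)‖ ^ 2 :=
              Finset.sum_mul_sq_le_sq_mul_sq _ _ _
          _ ≤ ‖x‖ ^ 2 * (ε / 2) ^ 2 := by gcongr
          _ = _ := by ring

/-- If a unitary representation `π` of `G` on a Hilbert space `H` admits a nonzero
Hilbert–Schmidt operator `X` (i.e. `Σᵢ ‖X eᵢ‖² < ∞` for a Hilbert basis `(eᵢ)`) with
`π_g X π_g* = X` for all `g`, then `H` contains a nonzero finite-dimensional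
`π`-invariant subspace. -/
theorem invariant_hilbertSchmidt_gives_finiteDimensional_subspace {𝕜 H : Type*} [RCLike 𝕜]
    [NormedAddCommGroup H] [InnerProductSpace 𝕜 H] [CompleteSpace H]
    {G : Type*} [Group G] (π : G →* (H ≃ₗᵢ[𝕜] H))
    (X : H →L[𝕜] H) (hX : X ≠ 0)
    {ι : Type*} (b : HilbertBasis ι 𝕜 H)
    (hHS : Summable (fun i => ‖X (b i)‖ ^ 2))
    (hfix : ∀ (g : G) (ξ : H), π g (X ((π g).symm ξ)) = X ξ) :
    ∃ V : Submodule 𝕜 H, V ≠ ⊥ ∧ FiniteDimensional 𝕜 V ∧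
      ∀ g : G, ∀ v ∈ V, π g v ∈ V := by
  let T : H →L[𝕜] H := (ContinuousLinearMap.adjoint X).comp X
  have hin (y x : H) : ⟪y, T x⟫_𝕜 = ⟪X y, X x⟫_𝕜 :=
    ContinuousLinearMap.adjoint_inner_right X y (X x)
  have hTc : IsCompactOperator T :=
    (isCompactOperator_of_summable_norm_sq X b hHS).clm_comp (ContinuousLinearMap.adjoint X)
  have hTs : T.IsSymmetric := fun x y => by
    change ⟪T x, y⟫_𝕜 = ⟪x, T y⟫_𝕜
    rw [hin, ← inner_conj_symm, hin, inner_conj_symm]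
  have hT0 : T ≠ 0 := fun h => hX <| by
    ext x
    have := hin x x
    rw [h] at this
    simpa using this.symm
  obtain ⟨μ, hμ, hμ0⟩ : ∃ μ, Module.End.HasEigenvalue (T : Module.End 𝕜 H) μ ∧ μ ≠ 0 := by
    by_contra! h
    exact hT0 ((ContinuousLinearMap.eq_zero_of_forall_hasEigenvalue_eq_zero hTc hTs).1 h)
  refine ⟨Module.End.eigenspace (T : Module.End 𝕜 H) μ, hμ,
    ContinuousLinearMap.finite_dimensional_eigenspace hTc μ hμ0, fun g v hv => ?_⟩
  have hsymm (y : H) : X ((π g).symm y) = (π g).symm (X y) := by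
    rw [← hfix g y, LinearIsometryEquiv.symm_apply_apply]
  have hmap (y : H) : X (π g y) = π g (X y) := by
    rw [← hfix g (π g y), LinearIsometryEquiv.symm_apply_apply]
  have hcomm : T (π g v) = π g (T v) := by
    refine ext_inner_left 𝕜 fun y => ?_
    rw [hin, hmap, ← LinearIsometryEquiv.inner_map_map (π g).symm y,
      LinearIsometryEquiv.symm_apply_apply, hin, hsymm,
      ← LinearIsometryEquiv.inner_map_map (π g).symm (X y),
      LinearIsometryEquiv.symm_apply_apply]
  rw [Module.End.mem_eigenspace_iff] at hv ⊢
  change T v = μ • v at hv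
  change T (π g v) = μ • π g v
  rw [hcomm, hv, map_smul]
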